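/- Let T be any tree in the family F(n) and let λ = ρ(T) be its spectral radius. With θ = (−λ − √(λ²−4))/2 and a_2 = −λ + 1/λ, one has r2 ≤ a_2·θ. -/

import Mathlib

/-!
The number `a₂θ` equals `(λ - 1/λ) τ` with `τ = (λ + √(λ² - 4)) / 2`, an increasing function of
`λ ≥ 2`. Its value is exactly `r2` at the spectral radius `μ = t + 1/t` of the infinite tree made
of a sun with `r2` rays and an infinite path attached to its centre; there `s = t²` is the positive
root of `s² = (r2 - 1)(s + 1)` (`exists_param`). So it suffices that `μ ≤ ρ(T)`
(`bound_of_specRad_le`).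

For this, `T` carries the nonnegative test vector `testVec`: it grows like `t ^ i` along the path
from `u` to the sun with `r2` rays, is extended to the rays by the eigenvalue equation, takes the
value `1/(2t)` at the first vertex of each of the two other branches at `u`, and vanishes
elsewhere. The two values `1/(2t)` add up to what the next vertex of an infinite path would
contribute at `u`, and `1 ≥ μ/(2t)` makes the vector `μ`-subharmonic at these two vertices. Hence
`A y ≥ μ y` everywhere, and a Rayleigh quotient argument (`le_specRad_of_subharmonic`) gives
`μ ≤ ρ(T)`.
-/

/-- The spectral radius (largest adjacency eigenvalue) of a finite simple graph. -/
noncomputable def specRad {V : Type*} [Fintype V] [DecidableEq V] (G : SimpleGraph V) : ℝ :=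
  letI := Classical.decRel G.Adj
  sSup {x : ℝ | Module.End.HasEigenvalue (Matrix.toLin' (G.adjMatrix ℝ)) x}

/-- Vertex set of the trees `[h, q1, q2]` in the family `F(n)`:
the starlike root `u`, a pendant path with `h` edges, a path with `q1` edges carrying a sun
with `r1` rays at its far end, and a path with `q2` edges carrying a sun with `r2` rays. -/
abbrev FVert (h q1 q2 r1 r2 : ℕ) : Type :=
  Unit ⊕ Fin h ⊕ Fin q1 ⊕ Fin q2 ⊕ (Fin r1 × Fin 2) ⊕ (Fin r2 × Fin 2)

/-- Base adjacency relation for the tree `[h, q1, q2]`. -/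
def FAdj (h q1 q2 r1 r2 : ℕ) : FVert h q1 q2 r1 r2 → FVert h q1 q2 r1 r2 → Prop :=
  fun a b =>
    (∃ i : Fin h, i.val = 0 ∧ a = Sum.inl () ∧ b = Sum.inr (Sum.inl i)) ∨
    (∃ i j : Fin h, j.val = i.val + 1 ∧ a = Sum.inr (Sum.inl i) ∧ b = Sum.inr (Sum.inl j)) ∨
    (∃ i : Fin q1, i.val = 0 ∧ a = Sum.inl () ∧ b = Sum.inr (Sum.inr (Sum.inl i))) ∨
    (∃ i j : Fin q1, j.val = i.val + 1 ∧ a = Sum.inr (Sum.inr (Sum.inl i)) ∧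
      b = Sum.inr (Sum.inr (Sum.inl j))) ∨
    (∃ i : Fin q2, i.val = 0 ∧ a = Sum.inl () ∧ b = Sum.inr (Sum.inr (Sum.inr (Sum.inl i)))) ∨
    (∃ i j : Fin q2, j.val = i.val + 1 ∧ a = Sum.inr (Sum.inr (Sum.inr (Sum.inl i))) ∧
      b = Sum.inr (Sum.inr (Sum.inr (Sum.inl j)))) ∨
    (∃ (i : Fin q1) (s : Fin r1), i.val = q1 - 1 ∧ a = Sum.inr (Sum.inr (Sum.inl i)) ∧
      b = Sum.inr (Sum.inr (Sum.inr (Sum.inr (Sum.inl (s, 0)))))) ∨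
    (∃ s : Fin r1, a = Sum.inr (Sum.inr (Sum.inr (Sum.inr (Sum.inl (s, 0))))) ∧
      b = Sum.inr (Sum.inr (Sum.inr (Sum.inr (Sum.inl (s, 1)))))) ∨
    (∃ (i : Fin q2) (s : Fin r2), i.val = q2 - 1 ∧ a = Sum.inr (Sum.inr (Sum.inr (Sum.inl i))) ∧
      b = Sum.inr (Sum.inr (Sum.inr (Sum.inr (Sum.inr (s, 0)))))) ∨
    (∃ s : Fin r2, a = Sum.inr (Sum.inr (Sum.inr (Sum.inr (Sum.inr (s, 0))))) ∧
      b = Sum.inr (Sum.inr (Sum.inr (Sum.inr (Sum.inr (s, 1))))))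

/-- The tree `[h, q1, q2]` of the family `F(n)` (with fixed sun parameters `r1, r2`). -/
def FTree (h q1 q2 r1 r2 : ℕ) : SimpleGraph (FVert h q1 q2 r1 r2) :=
  SimpleGraph.fromRel (FAdj h q1 q2 r1 r2)

/-! ### Lower bounds for the spectral radius -/

/-- A nonzero nonnegative vector with `A y ≥ μ y` forces an eigenvalue at least `μ`: otherwise
`μ - A` would be positive definite, whereas its quadratic form at `y` is not positive. -/
lemma le_specRad_of_subharmonic {V : Type*} [Fintype V] [DecidableEq V] (G : SimpleGraph V)
    (μ : ℝ) (y : V → ℝ) (hy0 : ∀ v, 0 ≤ y v) (hne : y ≠ 0)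
    (hsub : ∀ v, 0 < y v → ∃ S : Finset V, (∀ w ∈ S, G.Adj v w) ∧ μ * y v ≤ ∑ w ∈ S, y w) :
    μ ≤ specRad G := by
  unfold specRad
  let _ : DecidableRel G.Adj := Classical.decRel G.Adj
  set A : Matrix V V ℝ := G.adjMatrix ℝ with hA
  have hAs : A.IsHermitian := by
    rw [Matrix.IsHermitian, Matrix.conjTranspose_eq_transpose_of_trivial]
    exact G.transpose_adjMatrix
  have hAy : ∀ v, y v * (μ * y v) ≤ y v * (A.mulVec y) v := by
    intro v
    rcases (hy0 v).eq_or_lt with h | h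
    · simp [← h]
    · obtain ⟨S, hS, hle⟩ := hsub v h
      refine mul_le_mul_of_nonneg_left (hle.trans ?_) (hy0 v)
      rw [hA, SimpleGraph.adjMatrix_mulVec_apply]
      refine Finset.sum_le_sum_of_subset_of_nonneg ?_ (fun w _ _ => hy0 w)
      intro w hw
      simpa using hS w hw
  set B : Matrix V V ℝ := μ • (1 : Matrix V V ℝ) - A with hB
  have hBs : B.IsHermitian := by
    refine Matrix.IsHermitian.sub ?_ hAs
    rw [Matrix.IsHermitian, Matrix.conjTranspose_smul]
    simp
  have hex : ∃ i, hBs.eigenvalues i ≤ 0 := by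
    by_contra! hcon
    have hpd := hBs.posDef_iff_eigenvalues_pos.2 hcon
    have h1 := hpd.dotProduct_mulVec_pos hne
    have h2 : star y ⬝ᵥ B.mulVec y = ∑ v, (y v * (μ * y v) - y v * (A.mulVec y) v) := by
      rw [hB, Matrix.sub_mulVec, Matrix.smul_mulVec, Matrix.one_mulVec]
      simp [dotProduct, mul_sub]
    rw [h2] at h1
    exact absurd h1 (not_lt.2 (Finset.sum_nonpos fun v _ => sub_nonpos.2 (hAy v)))
  obtain ⟨i, hi⟩ := hex
  have hv := hBs.mulVec_eigenvectorBasis i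
  set v : V → ℝ := ⇑(hBs.eigenvectorBasis i) with hvdef
  have hv0 : v ≠ 0 := by
    intro h0
    apply hBs.eigenvectorBasis.toBasis.ne_zero i
    ext w
    simpa using congrFun h0 w
  have hAv : A.mulVec v = (μ - hBs.eigenvalues i) • v := by
    have hBv : B.mulVec v = μ • v - A.mulVec v := by
      rw [hB, Matrix.sub_mulVec, Matrix.smul_mulVec, Matrix.one_mulVec]
    rw [sub_smul, ← hv, hBv]
    abel
  have hev : Module.End.HasEigenvalue (Matrix.toLin' A) (μ - hBs.eigenvalues i) := by
    refine Module.End.hasEigenvalue_of_hasEigenvector (x := v) ⟨?_, hv0⟩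
    rw [Module.End.mem_eigenspace_iff, Matrix.toLin'_apply, hAv]
  refine le_trans ?_ (le_csSup (Module.End.finite_hasEigenvalue _).bddAbove hev)
  linarith

/-! ### The test vector -/

/-- Test vector on the tree: `t ^ i` at distance `i` from `u` along the path of length `q2`,
`L t ^ q2` and `M t ^ q2` at the inner and outer vertices of the rays of the second sun, `1/(2t)`
at the first vertex of the two other branches at `u`, and zero elsewhere. -/
noncomputable def testVec (h q1 q2 r1 r2 : ℕ) (t L M : ℝ) : FVert h q1 q2 r1 r2 → ℝ
  | Sum.inl _ => 1
  | Sum.inr (Sum.inl i) => if i.val = 0 then 1 / (2 * t) else 0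
  | Sum.inr (Sum.inr (Sum.inl i)) => if i.val = 0 then 1 / (2 * t) else 0
  | Sum.inr (Sum.inr (Sum.inr (Sum.inl i))) => t ^ (i.val + 1)
  | Sum.inr (Sum.inr (Sum.inr (Sum.inr (Sum.inl _)))) => 0
  | Sum.inr (Sum.inr (Sum.inr (Sum.inr (Sum.inr (_, j))))) =>
      (if j = 0 then L else M) * t ^ q2

lemma FTree_adj_of {h q1 q2 r1 r2 : ℕ} {a b : FVert h q1 q2 r1 r2} (hne : a ≠ b)
    (hab : FAdj h q1 q2 r1 r2 a b) : (FTree h q1 q2 r1 r2).Adj a b :=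
  (SimpleGraph.fromRel_adj _ _ _).2 ⟨hne, Or.inl hab⟩

/-- The vertex preceding `i` on the path of length `q2` (the root `u` when `i = 0`) is adjacent to
`i` and carries the value `t ^ i`. -/
lemma exists_prev {h q1 q2 r1 r2 : ℕ} (t L M : ℝ) (i : Fin q2) :
    ∃ p : FVert h q1 q2 r1 r2,
      (FTree h q1 q2 r1 r2).Adj (Sum.inr (Sum.inr (Sum.inr (Sum.inl i)))) p ∧
      testVec h q1 q2 r1 r2 t L M p = t ^ i.val ∧
      (∀ j : Fin q2, p = Sum.inr (Sum.inr (Sum.inr (Sum.inl j))) → j.val < i.val) ∧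
      (∀ s, p ≠ Sum.inr (Sum.inr (Sum.inr (Sum.inr (Sum.inr s))))) := by
  by_cases hi : i.val = 0
  · refine ⟨Sum.inl (), (FTree_adj_of (by simp) ?_).symm, by simp [testVec, hi], by simp, by simp⟩
    simp [FAdj, hi]
  · have hlt : i.val - 1 < q2 := by omega
    refine ⟨Sum.inr (Sum.inr (Sum.inr (Sum.inl ⟨i.val - 1, hlt⟩))),
      (FTree_adj_of ?_ ?_).symm, ?_, ?_, by simp⟩
    · simp only [ne_eq, Sum.inr.injEq, Sum.inl.injEq, Fin.ext_iff]
      omega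
    · simp only [FAdj]
      refine Or.inr <| Or.inr <| Or.inr <| Or.inr <| Or.inr <| Or.inl
        ⟨⟨i.val - 1, hlt⟩, i, ?_, rfl, rfl⟩
      simp only
      omega
    · simp only [testVec]
      congr 1
      omega
    · intro j hj
      simp only [Sum.inr.injEq, Sum.inl.injEq, Fin.ext_iff] at hj
      omega

/-- The hypotheses on `L` and `M` are the eigenvalue equations for `μ = t + 1/t` at the two
vertices of a ray and at the centre of the second sun, with the value at the centre scaled
to `1`. -/
lemma le_specRad_FTree (h q1 q2 r1 r2 : ℕ) (hh : 2 ≤ h) (hq1 : 2 ≤ q1) (hq2 : 2 ≤ q2)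
    (t μ L M : ℝ) (ht : 1 ≤ t) (hμ : μ = t + 1 / t) (hL0 : 0 ≤ L) (hM0 : 0 ≤ M)
    (hM : μ * M = L) (hL : μ * L = 1 + M) (hc : r2 * L = t) :
    μ ≤ specRad (FTree h q1 q2 r1 r2) := by
  classical
  have ht0 : 0 < t := by linarith
  have hμt : μ * (1 / (2 * t)) ≤ 1 := by
    have : 1 / t ≤ t := by
      rw [div_le_iff₀ ht0]
      nlinarith
    rw [mul_one_div, div_le_one (by positivity)]
    linarith
  refine le_specRad_of_subharmonic _ μ (testVec h q1 q2 r1 r2 t L M) ?_ ?_ ?_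
  · rintro (_ | i | i | i | s | ⟨s, j⟩) <;> simp only [testVec]
    · norm_num
    · split_ifs <;> positivity
    · split_ifs <;> positivity
    · positivity
    · exact le_rfl
    · split_ifs <;> positivity
  · intro h0
    have := congrFun h0 (Sum.inl ())
    simp [testVec] at this
  · rintro (_ | i | i | i | s | ⟨s, j⟩) hpos
    · refine ⟨{Sum.inr (Sum.inl ⟨0, by omega⟩), Sum.inr (Sum.inr (Sum.inl ⟨0, by omega⟩)),
        Sum.inr (Sum.inr (Sum.inr (Sum.inl ⟨0, by omega⟩)))}, ?_, ?_⟩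
      · intro w hw
        simp only [Finset.mem_insert, Finset.mem_singleton] at hw
        rcases hw with rfl | rfl | rfl <;> refine FTree_adj_of (by simp) ?_ <;> simp [FAdj]
      · rw [Finset.sum_insert (by simp), Finset.sum_insert (by simp), Finset.sum_singleton]
        simp only [testVec, if_true, hμ]
        apply le_of_eq
        field_simp
        ring
    · by_cases hi : i.val = 0
      · refine ⟨{Sum.inl ()}, ?_, ?_⟩
        · intro w hw
          rw [Finset.mem_singleton.1 hw]
          refine (FTree_adj_of (by simp) ?_).symm
          simp [FAdj, hi]
        · simpa [testVec, hi] using hμt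
      · simp [testVec, hi] at hpos
    · by_cases hi : i.val = 0
      · refine ⟨{Sum.inl ()}, ?_, ?_⟩
        · intro w hw
          rw [Finset.mem_singleton.1 hw]
          refine (FTree_adj_of (by simp) ?_).symm
          simp [FAdj, hi]
        · simpa [testVec, hi] using hμt
      · simp [testVec, hi] at hpos
    · obtain ⟨p, hadj, hval, hpj, hps⟩ := exists_prev (h := h) (q1 := q1) (r1 := r1) (r2 := r2)
        t L M i
      by_cases hi : i.val + 1 < q2
      · refine ⟨{p, Sum.inr (Sum.inr (Sum.inr (Sum.inl ⟨i.val + 1, hi⟩)))}, ?_, ?_⟩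
        · intro w hw
          simp only [Finset.mem_insert, Finset.mem_singleton] at hw
          rcases hw with rfl | rfl
          · exact hadj
          · refine FTree_adj_of ?_ ?_
            · simp [Fin.ext_iff]
            · exact Or.inr <| Or.inr <| Or.inr <| Or.inr <| Or.inr <| Or.inl
                ⟨i, ⟨i.val + 1, hi⟩, rfl, rfl, rfl⟩
        · rw [Finset.sum_pair (fun hp => by have := hpj _ hp; simp only at this; omega), hval]
          simp only [testVec, hμ]
          apply le_of_eq
          field_simp
          ring
      -- Here `i` is the centre of the sun with `r2` rays.
      · have hiq : i.val + 1 = q2 := by omega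
        refine ⟨insert p (Finset.univ.image fun s : Fin r2 =>
          (Sum.inr (Sum.inr (Sum.inr (Sum.inr (Sum.inr (s, 0))))) : FVert h q1 q2 r1 r2)), ?_, ?_⟩
        · intro w hw
          simp only [Finset.mem_insert, Finset.mem_image, Finset.mem_univ, true_and] at hw
          rcases hw with rfl | ⟨s, rfl⟩
          · exact hadj
          · refine FTree_adj_of (by simp) ?_
            exact Or.inr <| Or.inr <| Or.inr <| Or.inr <| Or.inr <| Or.inr <| Or.inr <| Or.inr <|
              Or.inl ⟨i, s, by omega, rfl, rfl⟩
        · rw [Finset.sum_insert, Finset.sum_image, hval]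
          · simp only [testVec, hμ, if_true, hiq, Finset.sum_const, Finset.card_univ,
              Fintype.card_fin, nsmul_eq_mul]
            have hpow : t ^ q2 = t ^ (i.val + 1) := by rw [hiq]
            rw [← mul_assoc, hc, hpow]
            apply le_of_eq
            field_simp
            ring
          · intro a _ b _ hab
            simpa using hab
          · simp only [Finset.mem_image, Finset.mem_univ, true_and, not_exists]
            exact fun s hs => hps _ hs.symm
    · simp [testVec] at hpos
    · have hj : j = 0 ∨ j = 1 := by omega
      rcases hj with rfl | rfl
      · have hq : q2 - 1 < q2 := by omega
        refine ⟨{Sum.inr (Sum.inr (Sum.inr (Sum.inl ⟨q2 - 1, hq⟩))),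
          Sum.inr (Sum.inr (Sum.inr (Sum.inr (Sum.inr (s, 1)))))}, ?_, ?_⟩
        · intro w hw
          simp only [Finset.mem_insert, Finset.mem_singleton] at hw
          rcases hw with rfl | rfl
          · refine (FTree_adj_of (by simp) ?_).symm
            exact Or.inr <| Or.inr <| Or.inr <| Or.inr <| Or.inr <| Or.inr <| Or.inr <| Or.inr <|
              Or.inl ⟨_, s, rfl, rfl, rfl⟩
          · refine FTree_adj_of (by simp) ?_
            exact Or.inr <| Or.inr <| Or.inr <| Or.inr <| Or.inr <| Or.inr <| Or.inr <| Or.inr <|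
              Or.inr ⟨s, rfl, rfl⟩
        · rw [Finset.sum_pair (by simp)]
          have hq' : q2 - 1 + 1 = q2 := by omega
          simp only [testVec, hq', if_true, one_ne_zero, if_false]
          rw [← mul_assoc, hL]
          apply le_of_eq
          ring
      · refine ⟨{Sum.inr (Sum.inr (Sum.inr (Sum.inr (Sum.inr (s, 0)))))}, ?_, ?_⟩
        · intro w hw
          rw [Finset.mem_singleton.1 hw]
          refine (FTree_adj_of (by simp) ?_).symm
          exact Or.inr <| Or.inr <| Or.inr <| Or.inr <| Or.inr <| Or.inr <| Or.inr <| Or.inr <|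
            Or.inr ⟨s, rfl, rfl⟩
        · simp only [testVec, Finset.sum_singleton, if_true, one_ne_zero, if_false]
          rw [← mul_assoc, hM]

/-! ### The limiting parameter -/

/-- The parameter `t` for which `t (μ - 1/μ) = r` with `μ = t + 1/t`; in terms of `s = t²` this
reads `s² = (r - 1)(s + 1)`. -/
lemma exists_param (r : ℝ) (hr : 3 ≤ r) :
    ∃ t : ℝ, 1 ≤ t ∧ t * ((t + 1 / t) - 1 / (t + 1 / t)) = r := by
  set m := r - 1 with hm
  set d := Real.sqrt (m ^ 2 + 4 * m) with hd
  have hd2 : d ^ 2 = m ^ 2 + 4 * m := Real.sq_sqrt (by nlinarith)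
  have hd0 : 0 ≤ d := Real.sqrt_nonneg _
  have hmd : m ≤ d := by nlinarith
  set s := (m + d) / 2 with hs
  have hs1 : 1 ≤ s := by linarith
  have hs2 : s ^ 2 = m * (s + 1) := by
    rw [hs]
    nlinarith
  refine ⟨Real.sqrt s, Real.one_le_sqrt.2 hs1, ?_⟩
  have ht2 : Real.sqrt s ^ 2 = s := Real.sq_sqrt (by linarith)
  have ht0 : 0 < Real.sqrt s := Real.sqrt_pos.2 (by linarith)
  set t := Real.sqrt s
  have h1 : t * ((t + 1 / t) - 1 / (t + 1 / t)) = t ^ 2 + 1 / (t ^ 2 + 1) := by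
    have : t ^ 2 + 1 ≠ 0 := by positivity
    field_simp
    ring
  rw [h1, ht2]
  have : s + 1 ≠ 0 := by linarith
  field_simp
  nlinarith

/-- Monotonicity of `(λ - 1/λ)(λ + √(λ² - 4))/2` in `λ`, in terms of `μ = t + 1/t`, for which
`√(μ² - 4) = t - 1/t`. -/
lemma bound_of_specRad_le (r t lam : ℝ) (ht : 1 ≤ t)
    (hr : t * ((t + 1 / t) - 1 / (t + 1 / t)) = r) (hle : t + 1 / t ≤ lam) :
    r ≤ (-lam + 1 / lam) * ((-lam - Real.sqrt (lam ^ 2 - 4)) / 2) := by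
  have ht0 : 0 < t := by linarith
  have hi : 0 < 1 / t := by positivity
  have hti : t * (1 / t) = 1 := by field_simp
  have hsq : t - 1 / t ≤ Real.sqrt (lam ^ 2 - 4) := by
    apply Real.le_sqrt_of_sq_le
    nlinarith
  have hinv : 1 / lam ≤ 1 / (t + 1 / t) := one_div_le_one_div_of_le (by positivity) hle
  have hinv1 : 1 / (t + 1 / t) ≤ 1 := by
    rw [div_le_one (by positivity)]
    linarith
  rw [← hr]
  calc t * ((t + 1 / t) - 1 / (t + 1 / t))
      ≤ ((lam + Real.sqrt (lam ^ 2 - 4)) / 2) * (lam - 1 / lam) := by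
        apply mul_le_mul <;> linarith [Real.sqrt_nonneg (lam ^ 2 - 4)]
    _ = _ := by ring

/-- For any tree `T = [h, q1, q2]` in `F(n)` with spectral radius `λ = ρ(T)`,
setting `θ = (-λ - √(λ²-4))/2` and `a₂ = -λ + 1/λ`, one has `r2 ≤ a₂·θ`. -/
theorem r2_le_a2_theta (r1 r2 h q1 q2 : ℕ)
    (hr1 : 2 ≤ r1) (hr12 : r1 < r2) (hh : 2 ≤ h) (hq1 : 2 ≤ q1) (hq2 : 2 ≤ q2)
    (lam θ a2 : ℝ) (hlam : lam = specRad (FTree h q1 q2 r1 r2))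
    (hθ : θ = (-lam - Real.sqrt (lam ^ 2 - 4)) / 2) (ha2 : a2 = -lam + 1 / lam) :
    (r2 : ℝ) ≤ a2 * θ := by
  have hr : (3 : ℝ) ≤ r2 := by exact_mod_cast (by omega : 3 ≤ r2)
  obtain ⟨t, ht, htr⟩ := exists_param r2 hr
  subst hθ ha2
  refine bound_of_specRad_le _ t _ ht htr ?_
  rw [hlam]
  have ht0 : 0 < t := by linarith
  set μ := t + 1 / t with hμ
  have hμ1 : 1 < μ := by
    have : 0 < 1 / t := by positivity
    linarith
  have hD : 0 < μ ^ 2 - 1 := by nlinarith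
  refine le_specRad_FTree h q1 q2 r1 r2 hh hq1 hq2 t μ (μ / (μ ^ 2 - 1)) (1 / (μ ^ 2 - 1)) ht hμ
    (by positivity) (by positivity) (by ring) (by field_simp; ring) ?_
  rw [← htr]
  field_simp
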